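/- Let v ≥ 2 and let T be a simple graph on v vertices that is a tree (connected with no cycles; equivalently connected with v−1 edges). Then for every real y ≥ 0, det( L(T) + vy·I ) ≤ det( L(P_v) + vy·I ), where P_v is the path graph on v vertices and L(·) denotes the Laplacian matrix. -/

import Mathlib

noncomputable instance (n : ℕ) : DecidableRel (SimpleGraph.pathGraph n).Adj :=
  Classical.decRel _

/-!
Fix `x ≥ 0` and attach to a tree with a chosen vertex `w` two numbers: the determinant of `L + x I`,
and its cofactor at `w`. Cutting an edge `r — c` expresses both numbers of the tree (with `w = c`)
through those of the two pieces, polynomially with nonnegative coefficients. By induction both are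
at most the values `pₙ`, `qₙ` for a path on the same number of vertices with `w` an end: for the
determinant this is the identity `p (k + l) = p k * q (l + 1) + q k * p l`, and for the cofactor the
inequality `q (k + 1) * q l ≤ q (k + l)`, `1 ≤ l`. The vertex `w` is arbitrary, so the edge to cut
can be any edge at `w`.
-/

open Matrix SimpleGraph

section JoinedBlocks

variable {m n R : Type*} [Fintype m] [Fintype n] [DecidableEq m] [DecidableEq n] [CommRing R]

theorem det_add_single_self (A : Matrix m m R) (i : m) (a : R) :
    (A + single i i a).det = A.det + a * A.adjugate i i := by
  have row_eq : A + single i i a = A.updateRow i (A i + a • Pi.single i 1) := by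
    ext j k
    by_cases hj : j = i
    · subst hj
      simp [single_apply, Pi.single_apply, eq_comm]
    · simp [hj, Ne.symm hj]
  rw [row_eq, det_updateRow_add, updateRow_eq_self, det_updateRow_smul, adjugate_apply]

/-- The block diagonal matrix with blocks `M` and `N` plus the Laplacian of one edge joining the
index `r` of `M` to the index `c` of `N`. -/
def edgeJoinMatrix (M : Matrix m m R) (N : Matrix n n R) (r : m) (c : n) :
    Matrix (m ⊕ n) (m ⊕ n) R :=
  fromBlocks (M + single r r 1) (-single r c 1) (-single c r 1) (N + single c c 1)

variable (M : Matrix m m R) (N : Matrix n n R) (r : m) (c : n)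

theorem adjugate_edgeJoinMatrix_inr :
    (edgeJoinMatrix M N r c).adjugate (Sum.inr c) (Sum.inr c) =
      (M.det + M.adjugate r r) * N.adjugate c c := by
  have grounded : (edgeJoinMatrix M N r c).updateRow (Sum.inr c) (Pi.single (Sum.inr c) 1) =
      fromBlocks (M + single r r 1) (-single r c 1) 0 (N.updateRow c (Pi.single c 1)) := by
    ext (i | i) (j | j) <;>
      simp +contextual [edgeJoinMatrix, updateRow_apply, Pi.single_apply, single_apply, eq_comm]
  rw [adjugate_apply, grounded, det_fromBlocks_zero₂₁, det_add_single_self,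
    adjugate_apply N, one_mul]

theorem det_edgeJoinMatrix :
    (edgeJoinMatrix M N r c).det =
      (M.det + M.adjugate r r) * N.det + M.det * N.adjugate c c := by
  have split_row : edgeJoinMatrix M N r c = (edgeJoinMatrix M N r c).updateRow (Sum.inr c)
      (Sum.elim (0 : m → R) (N c) + Sum.elim (-Pi.single r 1) (Pi.single c 1)) := by
    ext (i | i) (j | j) <;>
      simp +contextual [edgeJoinMatrix, updateRow_apply, Pi.single_apply, single_apply,
        eq_comm] <;>
      grind
  have unlinked : (edgeJoinMatrix M N r c).updateRow (Sum.inr c) (Sum.elim (0 : m → R) (N c)) =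
      fromBlocks (M + single r r 1) (-single r c 1) 0 N := by
    ext (i | i) (j | j) <;>
      simp +contextual [edgeJoinMatrix, updateRow_apply, single_apply, eq_comm]
  -- In this term, adding row `c` to row `r` cancels the contribution of the edge to row `r`.
  have linked : (edgeJoinMatrix M N r c).updateRow (Sum.inr c)
        (Sum.elim (-Pi.single r 1) (Pi.single c 1)) =
      fromBlocks 1 (-single r c 1) 0 1 *
        fromBlocks M 0 (-single c r 1) (N.updateRow c (Pi.single c 1)) := by
    rw [fromBlocks_multiply]
    ext (i | i) (j | j) <;>
      simp +contextual [edgeJoinMatrix, updateRow_apply, Pi.single_apply, single_apply,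
        single_mul_eq_updateRow_zero, eq_comm] <;> grind
  rw [split_row, det_updateRow_add, unlinked, linked, det_mul, det_fromBlocks_zero₂₁,
    det_fromBlocks_zero₂₁, det_fromBlocks_zero₁₂, det_add_single_self, adjugate_apply N]
  simp only [det_one, one_mul]

end JoinedBlocks

section EdgeJoin

variable {V W : Type*}

/-- The disjoint union of two graphs with one extra edge joining `r` to `c`. -/
def edgeJoin (G : SimpleGraph V) (H : SimpleGraph W) (r : V) (c : W) : SimpleGraph (V ⊕ W) :=
  (G ⊕g H) ⊔ edge (Sum.inl r) (Sum.inr c)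

variable (G : SimpleGraph V) (H : SimpleGraph W) (r : V) (c : W)

@[simp]
theorem edgeJoin_adj_inl_inl {i j : V} :
    (edgeJoin G H r c).Adj (Sum.inl i) (Sum.inl j) ↔ G.Adj i j := by
  simp [edgeJoin, edge_adj]

@[simp]
theorem edgeJoin_adj_inr_inr {i j : W} :
    (edgeJoin G H r c).Adj (Sum.inr i) (Sum.inr j) ↔ H.Adj i j := by
  simp [edgeJoin, edge_adj]

@[simp]
theorem edgeJoin_adj_inl_inr {i : V} {j : W} :
    (edgeJoin G H r c).Adj (Sum.inl i) (Sum.inr j) ↔ i = r ∧ j = c := by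
  simp [edgeJoin, edge_adj]

@[simp]
theorem edgeJoin_adj_inr_inl {i : W} {j : V} :
    (edgeJoin G H r c).Adj (Sum.inr i) (Sum.inl j) ↔ i = c ∧ j = r := by
  rw [SimpleGraph.adj_comm, edgeJoin_adj_inl_inr, and_comm]

variable {G H r c} in
/-- A graph on `U` cut into pieces `G` and `H` by a bijection `V ⊕ W ≃ U`, with only one edge across
the cut. -/
def edgeJoinIso {U : Type*} {K : SimpleGraph U} (e : V ⊕ W ≃ U)
    (left : ∀ i j, K.Adj (e (Sum.inl i)) (e (Sum.inl j)) ↔ G.Adj i j)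
    (right : ∀ i j, K.Adj (e (Sum.inr i)) (e (Sum.inr j)) ↔ H.Adj i j)
    (across : ∀ i j, K.Adj (e (Sum.inl i)) (e (Sum.inr j)) ↔ i = r ∧ j = c) :
    edgeJoin G H r c ≃g K where
  toEquiv := e
  map_rel_iff' := by
    rintro (i | i) (j | j)
    · simp [left]
    · simp [across]
    · rw [K.adj_comm, across, edgeJoin_adj_inr_inl, and_comm]
    · simp [right]

/-- The path on `n + 2` vertices, cut at its last edge. -/
def pathGraphSuccIso (n : ℕ) :
    edgeJoin (pathGraph (n + 1)) (pathGraph 1) (Fin.last n) 0 ≃g pathGraph (n + 1 + 1) :=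
  edgeJoinIso finSumFinEquiv (by simp [pathGraph_adj]) (by simp [pathGraph_adj]) (by
    intro i j
    simp only [finSumFinEquiv_apply_left, finSumFinEquiv_apply_right, pathGraph_adj,
      Fin.val_castAdd, Fin.val_natAdd, Fin.ext_iff, Fin.val_last, Fin.val_zero]
    omega)

end EdgeJoin

section Bridge

variable {V : Type*} {G : SimpleGraph V} {u v : V}

theorem connected_induce_setOf_reachable {H : SimpleGraph V} (hle : H ≤ G) (u : V) :
    (G.induce {z | H.Reachable z u}).Connected := by
  have hH : (H.induce (H.connectedComponentMk u).supp).Connected :=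
    (H.connectedComponentMk u).connected_toSimpleGraph
  have supp_eq : (H.connectedComponentMk u).supp = {z | H.Reachable z u} := by
    ext z
    simp [ConnectedComponent.mem_supp_iff]
  rw [supp_eq] at hH
  exact hH.mono fun _ _ hadj => hle hadj

theorem reachable_deleteEdges_or (hG : G.Connected) (u v z : V) :
    (G.deleteEdges {s(u, v)}).Reachable z u ∨ (G.deleteEdges {s(u, v)}).Reachable z v := by
  obtain ⟨p⟩ := hG.preconnected z u
  induction p with
  | nil => exact .inl .rfl
  | @cons a b w hab _ ih =>
    by_cases he : s(a, b) = s(w, v)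
    · rcases Sym2.eq_iff.1 he with ⟨rfl, -⟩ | ⟨rfl, -⟩
      exacts [.inl .rfl, .inr .rfl]
    · have hab' : (G.deleteEdges {s(w, v)}).Reachable a b :=
        (deleteEdges_adj.2 ⟨hab, he⟩).reachable
      exact ih.imp hab'.trans hab'.trans

theorem exists_connected_induce_of_isBridge (hG : G.Connected) (huv : G.Adj u v)
    (hb : G.IsBridge s(u, v)) :
    ∃ S : Set V, u ∈ S ∧ v ∈ Sᶜ ∧ (G.induce S).Connected ∧ (G.induce Sᶜ).Connected ∧
      ∀ i ∈ S, ∀ j ∈ Sᶜ, G.Adj i j ↔ i = u ∧ j = v := by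
  set H := G.deleteEdges {s(u, v)}
  have hle : H ≤ G := deleteEdges_le _
  have hsep : ¬ H.Reachable u v := hb
  have compl_eq : {z | H.Reachable z u}ᶜ = {z | H.Reachable z v} := by
    ext z
    exact ⟨(reachable_deleteEdges_or hG u v z).resolve_left,
      fun hv hu => hsep (hu.symm.trans hv)⟩
  refine ⟨{z | H.Reachable z u}, .rfl, fun h => hsep h.symm,
    connected_induce_setOf_reachable hle u, ?_, fun i hi j hj => ⟨fun hij => ?_, ?_⟩⟩
  · rw [compl_eq]
    exact connected_induce_setOf_reachable hle v
  · have he : s(i, j) = s(u, v) := by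
      by_contra he
      exact hj ((deleteEdges_adj.2 ⟨hij, he⟩).reachable.symm.trans hi)
    rcases Sym2.eq_iff.1 he with h | ⟨rfl, -⟩
    · exact h
    · exact absurd hi.symm hsep
  · rintro ⟨rfl, rfl⟩
    exact huv

open Classical in
theorem exists_edgeJoinIso_of_isTree [Nontrivial V] (hG : G.IsTree) (v : V) :
    ∃ (S : Set V) (r : S) (c : (Sᶜ : Set V)) (e : edgeJoin (G.induce S) (G.induce Sᶜ) r c ≃g G),
      (G.induce S).IsTree ∧ (G.induce Sᶜ).IsTree ∧ e (Sum.inr c) = v := by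
  obtain ⟨u, hvu⟩ := hG.connected.preconnected.exists_adj_of_nontrivial v
  obtain ⟨S, hu, hv, hS, hSc, across⟩ := exists_connected_induce_of_isBridge hG.connected hvu.symm
    (isAcyclic_iff_forall_adj_isBridge.1 hG.isAcyclic hvu.symm)
  refine ⟨S, ⟨u, hu⟩, ⟨v, hv⟩, edgeJoinIso (Equiv.Set.sumCompl S) (by simp) (by simp) ?_,
    ⟨hS, hG.isAcyclic.induce S⟩, ⟨hSc, hG.isAcyclic.induce Sᶜ⟩, ?_⟩
  · simpa [Subtype.ext_iff] using across
  · simp [edgeJoinIso]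

end Bridge

section Degree

variable {V W : Type*} [Fintype V] [Fintype W] [DecidableEq V] (G : SimpleGraph V)
  (H : SimpleGraph W) [DecidableRel G.Adj] (R : Type*) [NonAssocSemiring R]

theorem degree_edgeJoin_inl (r : V) (c : W) [DecidableRel (edgeJoin G H r c).Adj] (i : V) :
    ((edgeJoin G H r c).degree (Sum.inl i) : R) = G.degree i + if i = r then 1 else 0 := by
  classical
  simp only [degree_eq_sum_if_adj, Fintype.sum_sum_type]
  simp [ite_and]

theorem degree_edgeJoin_inr (c : W) (r : V) [DecidableRel (edgeJoin H G c r).Adj] (i : V) :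
    ((edgeJoin H G c r).degree (Sum.inr i) : R) = G.degree i + if i = r then 1 else 0 := by
  classical
  simp only [degree_eq_sum_if_adj, Fintype.sum_sum_type]
  simp [ite_and, add_comm]

end Degree

section ShiftedLaplacian

variable {V W R : Type*} [Fintype V] [Fintype W] [DecidableEq V] [DecidableEq W] [CommRing R]
  {G : SimpleGraph V} {H : SimpleGraph W} [DecidableRel G.Adj] [DecidableRel H.Adj] (x : R)

variable (G) in
/-- The matrix `L(G) + x I`. -/
def shiftedLap : Matrix V V R := G.lapMatrix R + x • 1

theorem shiftedLap_edgeJoin (r : V) (c : W) [DecidableRel (edgeJoin G H r c).Adj] :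
    shiftedLap (edgeJoin G H r c) x =
      edgeJoinMatrix (shiftedLap G x) (shiftedLap H x) r c := by
  ext (i | i) (j | j)
  · by_cases hij : i = j <;>
      simp [shiftedLap, edgeJoinMatrix, lapMatrix, degMatrix, degree_edgeJoin_inl, single_apply,
        hij, eq_comm] <;> grind
  · simp [shiftedLap, edgeJoinMatrix, lapMatrix, degMatrix, single_apply, eq_comm]
  · simp [shiftedLap, edgeJoinMatrix, lapMatrix, degMatrix, single_apply, eq_comm]
  · by_cases hij : i = j <;>
      simp [shiftedLap, edgeJoinMatrix, lapMatrix, degMatrix, degree_edgeJoin_inr, single_apply,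
        hij, eq_comm] <;> grind

theorem shiftedLap_submatrix_iso (e : G ≃g H) :
    (shiftedLap H x).submatrix e e = shiftedLap G x := by
  ext i j
  simp [shiftedLap, lapMatrix, degMatrix, diagonal_apply, one_apply, adjMatrix_apply,
    e.map_adj_iff]

theorem det_shiftedLap_iso (e : G ≃g H) : (shiftedLap H x).det = (shiftedLap G x).det := by
  rw [← shiftedLap_submatrix_iso x e]
  exact (det_submatrix_equiv_self e.toEquiv _).symm

theorem adjugate_shiftedLap_iso (e : G ≃g H) (v : V) :
    (shiftedLap H x).adjugate (e v) (e v) = (shiftedLap G x).adjugate v v := by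
  rw [← shiftedLap_submatrix_iso x e]
  exact congr_fun₂ (adjugate_submatrix_equiv_self e.toEquiv _).symm v v

variable (G) in
theorem det_shiftedLap_of_subsingleton [Subsingleton V] [Nonempty V] :
    (shiftedLap G x).det = x := by
  obtain ⟨_⟩ := nonempty_unique V
  rw [det_unique]
  simp [shiftedLap, lapMatrix, degMatrix]

end ShiftedLaplacian

section PathSequences

mutual

/-- The determinant of `L(Pₙ) + x I` for `1 ≤ n`, given by its recursion and extended to `n = 0` by
the value `0`, for which `pathDet_add` holds (the empty matrix has determinant `1`). -/
def pathDet {R : Type*} [Semiring R] (x : R) : ℕ → R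
  | 0 => 0
  | n + 1 => (x + 1) * pathDet x n + x * pathCofactor x n

/-- The cofactor of `L(Pₙ) + x I` at an end of the path for `1 ≤ n`, given by its recursion and
extended to `n = 0` by the value `1`. -/
def pathCofactor {R : Type*} [Semiring R] (x : R) : ℕ → R
  | 0 => 1
  | n + 1 => pathDet x n + pathCofactor x n

end

theorem pathDet_add {R : Type*} [CommSemiring R] (x : R) (k l : ℕ) :
    pathDet x (k + l) = pathDet x k * pathCofactor x (l + 1) + pathCofactor x k * pathDet x l := by
  induction k generalizing l with
  | zero => simp [pathDet, pathCofactor]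
  | succ k ih =>
    rw [add_right_comm, add_assoc, ih (l + 1)]
    simp only [pathDet, pathCofactor]
    ring

variable {R : Type*} [CommSemiring R] [PartialOrder R] [IsOrderedRing R] {x : R}

theorem pathDet_nonneg_and_pathCofactor_nonneg (hx : 0 ≤ x) (n : ℕ) :
    0 ≤ pathDet x n ∧ 0 ≤ pathCofactor x n := by
  induction n with
  | zero => simp [pathDet, pathCofactor]
  | succ n ih =>
    obtain ⟨hdet, hcof⟩ := ih
    rw [pathDet, pathCofactor]
    exact ⟨add_nonneg (mul_nonneg (add_nonneg hx zero_le_one) hdet) (mul_nonneg hx hcof),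
      add_nonneg hdet hcof⟩

theorem pathCofactor_mul_le (hx : 0 ≤ x) (k l : ℕ) :
    pathCofactor x (k + 1) * pathCofactor x (l + 1) ≤ pathCofactor x (k + (l + 1)) := by
  induction k with
  | zero => simp [pathDet, pathCofactor]
  | succ k ih =>
    have hcof := (pathDet_nonneg_and_pathCofactor_nonneg hx (k + 1)).2
    have hdet := (pathDet_nonneg_and_pathCofactor_nonneg hx l).1
    calc pathCofactor x (k + 1 + 1) * pathCofactor x (l + 1)
        = pathDet x (k + 1) * pathCofactor x (l + 1) +
            pathCofactor x (k + 1) * pathCofactor x (l + 1) := by rw [pathCofactor, add_mul]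
      _ ≤ pathDet x (k + 1 + l) + pathCofactor x (k + (l + 1)) := by
          rw [pathDet_add x (k + 1) l]
          exact add_le_add (le_add_of_nonneg_right (mul_nonneg hcof hdet)) ih
      _ = pathCofactor x (k + 1 + (l + 1)) := by
          rw [← add_assoc (k + 1), pathCofactor, add_assoc k, add_comm 1 l]

end PathSequences

section Path

variable {R : Type*} [CommRing R] (x : R)

theorem det_and_adjugate_shiftedLap_pathGraph (n : ℕ) :
    (shiftedLap (pathGraph (n + 1)) x).det = pathDet x (n + 1) ∧
      (shiftedLap (pathGraph (n + 1)) x).adjugate (Fin.last n) (Fin.last n) =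
        pathCofactor x (n + 1) := by
  have hone : (shiftedLap (pathGraph 1) x).det = x := det_shiftedLap_of_subsingleton _ x
  have hadj : (shiftedLap (pathGraph 1) x).adjugate = 1 := adjugate_subsingleton _
  induction n with
  | zero => simp [-det_unique, hone, hadj, pathDet, pathCofactor]
  | succ n ih =>
    classical
    have hlast : pathGraphSuccIso n (Sum.inr 0) = Fin.last (n + 1) := rfl
    rw [← hlast, det_shiftedLap_iso x (pathGraphSuccIso n),
      adjugate_shiftedLap_iso x (pathGraphSuccIso n), shiftedLap_edgeJoin, det_edgeJoinMatrix,
      adjugate_edgeJoinMatrix_inr, ih.1, ih.2, hone, hadj, one_apply_eq]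
    rw [pathDet.eq_def x (n + 1 + 1), pathCofactor.eq_def x (n + 1 + 1)]
    constructor <;> ring

end Path

section Tree

variable {m n R : Type*} [Fintype m] [Fintype n] [DecidableEq m] [DecidableEq n] [CommRing R]
  [PartialOrder R] [IsOrderedRing R] {M : Matrix m m R} {N : Matrix n n R} {r : m} {c : n}
  {x : R} {k l : ℕ}

theorem det_edgeJoinMatrix_mem_Icc (hM : M.det ∈ Set.Icc 0 (pathDet x k))
    (hMr : M.adjugate r r ∈ Set.Icc 0 (pathCofactor x k))
    (hN : N.det ∈ Set.Icc 0 (pathDet x l))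
    (hNc : N.adjugate c c ∈ Set.Icc 0 (pathCofactor x l)) :
    (edgeJoinMatrix M N r c).det ∈ Set.Icc 0 (pathDet x (k + l)) := by
  obtain ⟨hM, hMle⟩ := hM
  obtain ⟨hMr, hMrle⟩ := hMr
  obtain ⟨hN, hNle⟩ := hN
  obtain ⟨hNc, hNcle⟩ := hNc
  have hdet : 0 ≤ pathDet x k := hM.trans hMle
  have hcof : 0 ≤ pathCofactor x k := hMr.trans hMrle
  rw [det_edgeJoinMatrix]
  refine ⟨by positivity, ?_⟩
  calc (M.det + M.adjugate r r) * N.det + M.det * N.adjugate c c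
      ≤ (pathDet x k + pathCofactor x k) * pathDet x l + pathDet x k * pathCofactor x l := by
        gcongr
    _ = pathDet x (k + l) := by rw [pathDet_add, pathCofactor]; ring

theorem adjugate_edgeJoinMatrix_mem_Icc (hx : 0 ≤ x) (hl : l ≠ 0)
    (hM : M.det ∈ Set.Icc 0 (pathDet x k))
    (hMr : M.adjugate r r ∈ Set.Icc 0 (pathCofactor x k))
    (hNc : N.adjugate c c ∈ Set.Icc 0 (pathCofactor x l)) :
    (edgeJoinMatrix M N r c).adjugate (Sum.inr c) (Sum.inr c) ∈
      Set.Icc 0 (pathCofactor x (k + l)) := by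
  obtain ⟨hM, hMle⟩ := hM
  obtain ⟨hMr, hMrle⟩ := hMr
  obtain ⟨hNc, hNcle⟩ := hNc
  have hdet : 0 ≤ pathDet x k := hM.trans hMle
  have hcof : 0 ≤ pathCofactor x k := hMr.trans hMrle
  obtain ⟨l, rfl⟩ := Nat.exists_eq_succ_of_ne_zero hl
  rw [adjugate_edgeJoinMatrix_inr]
  refine ⟨by positivity, ?_⟩
  calc (M.det + M.adjugate r r) * N.adjugate c c
      ≤ (pathDet x k + pathCofactor x k) * pathCofactor x (l + 1) := by gcongr
    _ = pathCofactor x (k + 1) * pathCofactor x (l + 1) := by rw [pathCofactor.eq_def x (k + 1)]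
    _ ≤ pathCofactor x (k + (l + 1)) := pathCofactor_mul_le hx k l

theorem shiftedLap_mem_Icc_of_isTree (hx : 0 ≤ x) {V : Type*} [Fintype V] [DecidableEq V]
    {T : SimpleGraph V} [DecidableRel T.Adj] (hT : T.IsTree) (hk : Fintype.card V = k) (v : V) :
    (shiftedLap T x).det ∈ Set.Icc 0 (pathDet x k) ∧
      (shiftedLap T x).adjugate v v ∈ Set.Icc 0 (pathCofactor x k) := by
  induction k using Nat.strong_induction_on generalizing V with
  | h k ih =>
  obtain hV | hV := subsingleton_or_nontrivial V
  · have : Nonempty V := ⟨v⟩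
    have hone : k = 1 := hk ▸ Fintype.card_eq_one_iff_nonempty_unique.2 (nonempty_unique V)
    rw [hone, det_shiftedLap_of_subsingleton, adjugate_subsingleton]
    simp [pathDet, pathCofactor, hx]
  · classical
    obtain ⟨S, r, c, e, hS, hSc, rfl⟩ := exists_edgeJoinIso_of_isTree hT v
    have hcard : Fintype.card S + Fintype.card (Sᶜ : Set V) = k := by
      rw [← hk, ← Fintype.card_sum, Fintype.card_congr e.toEquiv]
    have hSpos : 0 < Fintype.card S := Fintype.card_pos_iff.2 ⟨r⟩
    have hScpos : 0 < Fintype.card (Sᶜ : Set V) := Fintype.card_pos_iff.2 ⟨c⟩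
    obtain ⟨hM, hMr⟩ := ih _ (by omega) hS rfl r
    obtain ⟨hN, hNc⟩ := ih _ (by omega) hSc rfl c
    rw [det_shiftedLap_iso x e, adjugate_shiftedLap_iso x e, shiftedLap_edgeJoin, ← hcard]
    exact ⟨det_edgeJoinMatrix_mem_Icc hM hMr hN hNc,
      adjugate_edgeJoinMatrix_mem_Icc hx hScpos.ne' hM hMr hNc⟩

end Tree

theorem stmt_7_general {V R : Type*} [Fintype V] [DecidableEq V] [CommRing R] [PartialOrder R]
    [IsOrderedRing R] {T : SimpleGraph V} [DecidableRel T.Adj] (hT : T.IsTree) {n : ℕ}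
    (hn : Fintype.card V = n) {x : R} (hx : 0 ≤ x) :
    (T.lapMatrix R + x • 1).det ≤ ((pathGraph n).lapMatrix R + x • 1).det := by
  obtain ⟨v⟩ := hT.connected.nonempty
  obtain ⟨k, rfl⟩ := Nat.exists_eq_succ_of_ne_zero (hn ▸ Fintype.card_pos_iff.2 ⟨v⟩).ne'
  exact (shiftedLap_mem_Icc_of_isTree hx hT hn v).1.2.trans_eq
    (det_and_adjugate_shiftedLap_pathGraph x k).1.symm

theorem stmt_7 (v : ℕ) (hv : 2 ≤ v) (T : SimpleGraph (Fin v)) [DecidableRel T.Adj]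
    (hT : T.IsTree) :
    ∀ y : ℝ, 0 ≤ y →
      Matrix.det (T.lapMatrix ℝ + ((v : ℝ) * y) • (1 : Matrix (Fin v) (Fin v) ℝ)) ≤
      Matrix.det ((SimpleGraph.pathGraph v).lapMatrix ℝ +
        ((v : ℝ) * y) • (1 : Matrix (Fin v) (Fin v) ℝ)) := by
  exact fun y hy => stmt_7_general hT (Fintype.card_fin v) (mul_nonneg v.cast_nonneg hy)
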